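/- For the Euler totient function φ, ∑_{n ≤ x} φ(⌊x/n⌋)/⌊x/n⌋ = x · ∑_{m ≥ 1} φ(m)/(m²(m+1)) + O(x^{1/3} log x) as x → ∞. -/

import Mathlib

open Filter Finset

/-- Abel summation against a bounded antitone weight. -/
theorem abs_sum_mul_sub_le {c s : ℕ → ℝ} {M : ℝ} {a b : ℕ} (hM : 0 ≤ M)
    (hc : ∀ n, a ≤ n → n < b → |c n| ≤ M)
    (hanti : ∀ n, a ≤ n → n + 1 < b → c (n + 1) ≤ c n) (hs : ∀ n, |s n| ≤ 1) :
    |∑ n ∈ Ico a b, c n * (s (n + 1) - s n)| ≤ 4 * M := by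
  rcases Nat.lt_or_ge a b with hab | hab
  swap
  · rw [Ico_eq_empty_of_le hab]; simpa using hM
  obtain ⟨k, rfl⟩ : ∃ k, b = a + k + 1 := ⟨b - a - 1, by omega⟩
  have key : ∀ j ≤ k, |∑ n ∈ Ico a (a + j + 1), c n * (s (n + 1) - s n)
      - c (a + j) * s (a + j + 1) + c a * s a| ≤ c a - c (a + j) := by
    intro j
    induction j with
    | zero => intro _; simp [mul_sub]
    | succ j ih =>
      intro hj
      have h1 := ih (by omega)
      have h2 := hanti (a + j) (by omega) (by omega)
      rw [sum_Ico_succ_top (by omega : a ≤ a + (j + 1))]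
      have h3 : |(c (a + j) - c (a + j + 1)) * s (a + j + 1)| ≤ c (a + j) - c (a + j + 1) := by
        rw [abs_mul, abs_of_nonneg (sub_nonneg.2 h2)]
        exact mul_le_of_le_one_right (sub_nonneg.2 h2) (hs _)
      simp only [← add_assoc] at h1 h3 ⊢
      rw [abs_le] at h1 h3 ⊢
      constructor <;> nlinarith
  have h := key k le_rfl
  have h1 := hc a le_rfl (by omega)
  have h2 := hc (a + k) (by omega) (by omega)
  have h3 : |c a * s a| ≤ M := by
    rw [abs_mul]; exact (mul_le_of_le_one_right (abs_nonneg _) (hs _)).trans h1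
  have h4 : |c (a + k) * s (a + k + 1)| ≤ M := by
    rw [abs_mul]; exact (mul_le_of_le_one_right (abs_nonneg _) (hs _)).trans h2
  rw [abs_le] at *
  constructor <;> linarith

theorem cos_eq_half_sub_add_cot_mul {θ α : ℝ} (h : Real.sin α ≠ 0) :
    Real.cos θ = (Real.cos θ - Real.cos (θ + 2 * α)) / 2 +
      Real.cot α * (Real.sin (θ + 2 * α) - Real.sin θ) / 2 := by
  rw [Real.cot_eq_cos_div_sin, Real.cos_add, Real.sin_add, Real.cos_two_mul, Real.sin_two_mul]
  field_simp
  have := Real.sin_sq_add_cos_sq α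
  linear_combination (-(2 * Real.cos α * Real.sin θ)) * this

theorem two_mul_le_sin_pi_mul {δ t : ℝ} (hδ : 0 ≤ δ) (h1 : δ ≤ t) (h2 : t ≤ 1 - δ) :
    2 * δ ≤ Real.sin (Real.pi * t) := by
  have hpi := Real.pi_pos
  rcases le_total t (1 / 2) with h | h
  · have := Real.mul_le_sin (x := Real.pi * t) (by nlinarith) (by nlinarith)
    have e : 2 / Real.pi * (Real.pi * t) = 2 * t := by field_simp
    linarith
  · have := Real.mul_le_sin (x := Real.pi * (1 - t)) (by nlinarith) (by nlinarith)
    have e : 2 / Real.pi * (Real.pi * (1 - t)) = 2 * (1 - t) := by field_simp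
    have e2 : Real.sin (Real.pi * (1 - t)) = Real.sin (Real.pi * t) := by
      rw [← Real.sin_pi_sub]; congr 1; ring
    linarith

theorem abs_cot_pi_mul_le {δ t : ℝ} (hδ : 0 < δ) (h1 : δ ≤ t) (h2 : t ≤ 1 - δ) :
    |Real.cot (Real.pi * t)| ≤ 1 / (2 * δ) := by
  have h := two_mul_le_sin_pi_mul hδ.le h1 h2
  rw [Real.cot_eq_cos_div_sin, abs_div, abs_of_pos (a := Real.sin _) (by linarith)]
  exact div_le_div₀ zero_le_one (Real.abs_cos_le_one _) (by linarith) h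

theorem cot_pi_mul_le_cot_pi_mul {t u : ℝ} (h0 : 0 < t) (htu : t ≤ u) (h1 : u < 1) :
    Real.cot (Real.pi * u) ≤ Real.cot (Real.pi * t) := by
  have hpi := Real.pi_pos
  have hs : ∀ v : ℝ, 0 < v → v < 1 → 0 < Real.sin (Real.pi * v) := fun v hv hv' =>
    Real.sin_pos_of_pos_of_lt_pi (by positivity) (by nlinarith)
  rw [Real.cot_eq_cos_div_sin, Real.cot_eq_cos_div_sin,
    div_le_div_iff₀ (hs u (by linarith) h1) (hs t h0 (by linarith))]
  have := Real.sin_nonneg_of_nonneg_of_le_pi (x := Real.pi * u - Real.pi * t)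
    (by nlinarith) (by nlinarith)
  rw [Real.sin_sub] at this
  linarith

/-- The Kusmin–Landau inequality: cancellation in `∑ cos (2π f n)` when the differences of `f`
increase and stay away from the integers. -/
theorem abs_sum_cos_le_of_diff_mem_Icc {f : ℕ → ℝ} {δ : ℝ} {a b : ℕ} (hδ : 0 < δ)
    (hlo : ∀ n, a ≤ n → n < b → δ ≤ f (n + 1) - f n)
    (hhi : ∀ n, a ≤ n → n < b → f (n + 1) - f n ≤ 1 - δ)
    (hmono : ∀ n, a ≤ n → n + 1 < b → f (n + 1) - f n ≤ f (n + 2) - f (n + 1)) :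
    |∑ n ∈ Ico a b, Real.cos (2 * Real.pi * f n)| ≤ 1 + 1 / δ := by
  set g : ℕ → ℝ := fun n => f (n + 1) - f n with hg
  have key : ∑ n ∈ Ico a b, Real.cos (2 * Real.pi * f n) =
      -(∑ n ∈ Ico a b, (1 : ℝ) *
        (Real.cos (2 * Real.pi * f (n + 1)) - Real.cos (2 * Real.pi * f n))) / 2 +
      (∑ n ∈ Ico a b, Real.cot (Real.pi * g n) *
        (Real.sin (2 * Real.pi * f (n + 1)) - Real.sin (2 * Real.pi * f n))) / 2 := by
    rw [neg_div, Finset.sum_div, Finset.sum_div, ← Finset.sum_neg_distrib,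
      ← Finset.sum_add_distrib]
    refine Finset.sum_congr rfl fun n hn => ?_
    rw [Finset.mem_Ico] at hn
    have h := two_mul_le_sin_pi_mul hδ.le (hlo n hn.1 hn.2) (hhi n hn.1 hn.2)
    have e : 2 * Real.pi * f (n + 1) = 2 * Real.pi * f n + 2 * (Real.pi * g n) := by
      simp only [hg]; ring
    have := cos_eq_half_sub_add_cot_mul (θ := 2 * Real.pi * f n) (α := Real.pi * g n)
      (by simp only [hg]; linarith)
    rw [e]
    linarith
  rw [key]
  have h1 : |∑ n ∈ Ico a b, (1 : ℝ) *
      (Real.cos (2 * Real.pi * f (n + 1)) - Real.cos (2 * Real.pi * f n))| ≤ 2 := by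
    rcases le_total a b with hab | hab
    · simp only [one_mul]
      rw [Finset.sum_Ico_sub (fun n => Real.cos (2 * Real.pi * f n)) hab]
      have := Real.abs_cos_le_one (2 * Real.pi * f a)
      have := Real.abs_cos_le_one (2 * Real.pi * f b)
      rw [abs_le] at *
      constructor <;> linarith
    · rw [Ico_eq_empty_of_le hab]; simp
  have h2 := abs_sum_mul_sub_le (c := fun n => Real.cot (Real.pi * g n))
    (s := fun n => Real.sin (2 * Real.pi * f n)) (M := 1 / (2 * δ)) (a := a) (b := b)
    (by positivity) (fun n ha hb => abs_cot_pi_mul_le hδ (hlo n ha hb) (hhi n ha hb))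
    (fun n ha hb => cot_pi_mul_le_cot_pi_mul (hδ.trans_le (hlo n ha (by omega))) (hmono n ha hb)
      (by linarith [hhi (n + 1) (by omega) hb]))
    (fun n => Real.abs_sin_le_one _)
  have e : 4 * (1 / (2 * δ)) = 2 * (1 / δ) := by field_simp; norm_num
  rw [e] at h2
  rw [abs_le] at *
  constructor <;> linarith

theorem abs_sum_cos_le_of_floor_diff_eq {f : ℕ → ℝ} {l : ℝ} {a b : ℕ} {k : ℤ} (hl : 0 < l)
    (hk : ∀ n, a ≤ n → n < b → ⌊f (n + 1) - f n⌋ = k)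
    (hgap : ∀ n, a ≤ n → n < b → l ≤ f (n + 2) - 2 * f (n + 1) + f n) :
    |∑ n ∈ Ico a b, Real.cos (2 * Real.pi * f n)| ≤ 3 * (1 / √l) + 3 := by
  have hsl : 0 < √l := Real.sqrt_pos.2 hl
  set j : ℕ := ⌈1 / √l⌉₊ with hj
  have hj1 : 1 / √l ≤ j := Nat.le_ceil _
  have hj2 : (j : ℝ) < 1 / √l + 1 := Nat.ceil_lt_add_one (by positivity)
  have htriv : ∀ u v : ℕ, |∑ n ∈ Ico u v, Real.cos (2 * Real.pi * f n)| ≤ (v - u : ℕ) := by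
    intro u v
    refine (Finset.abs_sum_le_sum_abs _ _).trans ?_
    refine (Finset.sum_le_card_nsmul _ _ 1 fun n _ => Real.abs_cos_le_one _).trans ?_
    simp
  rcases le_or_gt (b - a) (2 * j) with hba | hba
  · refine (htriv a b).trans ?_
    have : ((b - a : ℕ) : ℝ) ≤ 2 * j := by exact_mod_cast hba
    have : 0 < 1 / √l := by positivity
    linarith
  have hjl : √l ≤ j * l := by
    have : √l = 1 / √l * l := by
      field_simp; exact Real.sq_sqrt hl.le
    rw [this]; gcongr
  have hup : ∀ i n, a ≤ n → n + i ≤ b →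
      f (n + 1) - f n + i * l ≤ f (n + i + 1) - f (n + i) := by
    intro i
    induction i with
    | zero => intro n _ _; simp
    | succ i ih =>
      intro n ha hb
      have h1 := ih n ha (by omega)
      have h2 := hgap (n + i) (by omega) (by omega)
      have e1 : n + (i + 1) + 1 = n + i + 2 := by ring
      rw [e1, ← add_assoc]
      push_cast
      linarith
  have hmid : |∑ n ∈ Ico (a + j) (b - j), Real.cos (2 * Real.pi * f n)| ≤ 1 + 1 / √l := by
    have hper : ∀ n : ℕ, Real.cos (2 * Real.pi * f n) =
        Real.cos (2 * Real.pi * (f n - k * n)) := by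
      intro n
      rw [← Real.cos_sub_int_mul_two_pi _ (k * n)]
      congr 1; push_cast; ring
    rw [Finset.sum_congr rfl fun n _ => hper n]
    refine abs_sum_cos_le_of_diff_mem_Icc (f := fun n => f n - k * n) hsl ?_ ?_ ?_
    · intro n ha hb
      have h1 := hup j (n - j) (by omega) (by omega)
      rw [Nat.sub_add_cancel (by omega)] at h1
      have h2 := Int.floor_le (f (n - j + 1) - f (n - j))
      rw [hk (n - j) (by omega) (by omega)] at h2
      push_cast
      linarith
    · intro n ha hb
      have h1 := hup j n (by omega) (by omega)
      have h2 := Int.lt_floor_add_one (f (n + j + 1) - f (n + j))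
      rw [hk (n + j) (by omega) (by omega)] at h2
      push_cast
      linarith
    · intro n ha hb
      have := hgap n (by omega) (by omega)
      push_cast
      linarith
  rw [← Finset.sum_Ico_consecutive _ (by omega : a ≤ a + j) (by omega : a + j ≤ b),
    ← Finset.sum_Ico_consecutive _ (by omega : a + j ≤ b - j) (by omega : b - j ≤ b)]
  have h1 := htriv a (a + j)
  have h2 := htriv (b - j) b
  rw [show a + j - a = j by omega] at h1
  rw [show b - (b - j) = j by omega] at h2
  rw [abs_le] at *
  constructor <;> linarith

/-- Van der Corput's second derivative test, phrased with second differences. -/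
theorem abs_sum_cos_le_of_second_diff {f : ℕ → ℝ} {l A : ℝ} {a b : ℕ} (hl : 0 < l)
    (hA : 1 ≤ A)
    (hlo : ∀ n, a ≤ n → n < b → l ≤ f (n + 2) - 2 * f (n + 1) + f n)
    (hhi : ∀ n, a ≤ n → n < b → f (n + 2) - 2 * f (n + 1) + f n ≤ A * l) :
    |∑ n ∈ Ico a b, Real.cos (2 * Real.pi * f n)| ≤
      6 * A * (b - a : ℕ) * √l + 12 * (1 / √l) := by
  have hsl : 0 < √l := Real.sqrt_pos.2 hl
  have hsq : √l * √l = l := Real.mul_self_sqrt hl.le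
  rcases le_or_gt 1 l with h1 | h1
  · have h2 : 1 ≤ √l := Real.one_le_sqrt.2 h1
    have : |∑ n ∈ Ico a b, Real.cos (2 * Real.pi * f n)| ≤ (b - a : ℕ) := by
      refine (Finset.abs_sum_le_sum_abs _ _).trans ?_
      refine (Finset.sum_le_card_nsmul _ _ 1 fun n _ => Real.abs_cos_le_one _).trans ?_
      simp
    refine this.trans ?_
    have h3 : (1 : ℝ) ≤ 6 * A * √l := by nlinarith
    have h4 : (0 : ℝ) ≤ (b - a : ℕ) := by positivity
    have h5 : 0 ≤ 12 * (1 / √l) := by positivity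
    nlinarith
  rcases Nat.lt_or_ge a b with hab | hab
  swap
  · rw [Ico_eq_empty_of_le hab]; simp; positivity
  set g : ℕ → ℝ := fun n => f (n + 1) - f n with hg
  have hstep : ∀ i, a + i ≤ b → g (a + i) ≤ g a + i * (A * l) := by
    intro i
    induction i with
    | zero => intro _; simp
    | succ i ih =>
      intro hb
      have h1 := ih (by omega)
      have h2 := hhi (a + i) (by omega) (by omega)
      simp only [hg] at *
      rw [← add_assoc]
      push_cast
      linarith
  have hmono : ∀ n m, a ≤ n → n ≤ m → m ≤ b → g n ≤ g m := by
    intro n m ha hnm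
    induction m, hnm using Nat.le_induction with
    | base => intro _; exact le_rfl
    | succ m hm ih =>
      intro hb
      have h1 := ih (by omega)
      have h2 := hlo m (by omega) (by omega)
      simp only [hg] at *
      linarith
  have hfib : ∀ k : ℤ, |∑ n ∈ Ico a b with ⌊g n⌋ = k, Real.cos (2 * Real.pi * f n)| ≤
      3 * (1 / √l) + 3 := by
    intro k
    rcases (filter (fun n => ⌊g n⌋ = k) (Ico a b)).eq_empty_or_nonempty with h | h
    · rw [h]; simp; positivity
    set S := filter (fun n => ⌊g n⌋ = k) (Ico a b) with hS
    have hprop : ∀ n ∈ S, (a ≤ n ∧ n < b) ∧ ⌊g n⌋ = k := fun n hn => by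
      simpa only [hS, mem_filter, Finset.mem_Ico] using hn
    have hmin := hprop _ (S.min'_mem h)
    have hmax := hprop _ (S.max'_mem h)
    have hSe : S = Ico (S.min' h) (S.max' h + 1) := by
      ext n
      constructor
      · intro hn
        exact Finset.mem_Ico.2 ⟨S.min'_le n hn, Nat.lt_succ_of_le (S.le_max' n hn)⟩
      · intro hn
        rw [Finset.mem_Ico] at hn
        have l1 := hmono (S.min' h) n hmin.1.1 hn.1 (by omega)
        have l2 := hmono n (S.max' h) (by omega) (by omega) (by omega)
        have l3 := Int.floor_le_floor l1
        have l4 := Int.floor_le_floor l2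
        rw [hS, mem_filter, Finset.mem_Ico]
        refine ⟨by omega, ?_⟩
        have l5 := hmin.2
        have l6 := hmax.2
        exact le_antisymm (l4.trans_eq l6) (l5.symm.trans_le l3)
    have hmem : ∀ n, S.min' h ≤ n → n < S.max' h + 1 → n ∈ S := fun n h1 h2 => by
      rw [hSe]; exact Finset.mem_Ico.2 ⟨h1, h2⟩
    rw [hSe]
    refine abs_sum_cos_le_of_floor_diff_eq hl (k := k) ?_ ?_
    · intro n h1 h2
      exact (mem_filter.1 (hmem n h1 h2)).2
    · intro n h1 h2
      have := Finset.mem_Ico.1 (mem_filter.1 (hmem n h1 h2)).1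
      exact hlo n this.1 this.2
  have hmaps : ∀ n ∈ Ico a b, ⌊g n⌋ ∈ Finset.Icc ⌊g a⌋ ⌊g b⌋ := by
    intro n hn
    rw [Finset.mem_Ico] at hn
    exact Finset.mem_Icc.2 ⟨Int.floor_le_floor (hmono a n le_rfl hn.1 hn.2.le),
      Int.floor_le_floor (hmono n b hn.1 hn.2.le le_rfl)⟩
  rw [← Finset.sum_fiberwise_of_maps_to hmaps]
  refine (Finset.abs_sum_le_sum_abs _ _).trans ?_
  refine (Finset.sum_le_card_nsmul _ _ _ fun k _ => hfib k).trans ?_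
  have hcard : ((Finset.Icc ⌊g a⌋ ⌊g b⌋).card : ℝ) ≤ (b - a : ℕ) * (A * l) + 2 := by
    have hfl := Int.floor_le_floor (hmono a b le_rfl hab.le le_rfl)
    have e : ((Finset.Icc ⌊g a⌋ ⌊g b⌋).card : ℤ) = ⌊g b⌋ + 1 - ⌊g a⌋ := by
      rw [Int.card_Icc]; omega
    have e' : ((Finset.Icc ⌊g a⌋ ⌊g b⌋).card : ℝ) = ⌊g b⌋ + 1 - ⌊g a⌋ := by exact_mod_cast e
    have h2 := hstep (b - a) (by omega)
    rw [show a + (b - a) = b by omega] at h2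
    have h3 := Int.floor_le (g b)
    have h4 := Int.lt_floor_add_one (g a)
    linarith
  rw [nsmul_eq_mul]
  have h2 : 1 ≤ 1 / √l := by
    rw [le_div_iff₀ hsl, one_mul]; exact Real.sqrt_le_one.2 h1.le
  calc ((Finset.Icc ⌊g a⌋ ⌊g b⌋).card : ℝ) * (3 * (1 / √l) + 3)
      ≤ ((b - a : ℕ) * (A * l) + 2) * (6 * (1 / √l)) := by
        gcongr; linarith
    _ = 6 * A * (b - a : ℕ) * √l + 12 * (1 / √l) := by
        have : l * (1 / √l) = √l := by field_simp; rw [sq, hsq]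
        linear_combination (6 * A * (b - a : ℕ)) * this

/-- The `1`-periodic extension of the second Bernoulli polynomial. -/
noncomputable def periodicBernoulliTwo (t : ℝ) : ℝ := Int.fract t ^ 2 - Int.fract t + 1 / 6

theorem hasSum_cos_div_sq (t : ℝ) :
    HasSum (fun n : ℕ => 1 / (n : ℝ) ^ 2 * Real.cos (2 * Real.pi * n * t))
      (Real.pi ^ 2 * periodicBernoulliTwo t) := by
  have h := hasSum_one_div_nat_pow_mul_cos one_ne_zero (x := Int.fract t)
    ⟨Int.fract_nonneg t, (Int.fract_lt_one t).le⟩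
  convert h using 1
  · funext n
    congr 1
    rw [← Real.cos_sub_int_mul_two_pi (2 * Real.pi * n * t) (n * ⌊t⌋)]
    congr 1
    rw [Int.fract]
    push_cast; ring
  · rw [← Polynomial.eval₂_eq_eval_map]
    simp [Polynomial.bernoulli, Finset.sum_range_succ, bernoulli_one, bernoulli_two,
      periodicBernoulliTwo, Polynomial.eval₂_add, Nat.factorial]
    ring

theorem fract_add_eq {t Δ : ℝ} (h0 : 0 ≤ Δ) (h1 : Δ ≤ 1) :
    (Int.fract t + Δ < 1 ∧ Int.fract (t + Δ) = Int.fract t + Δ) ∨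
      (1 ≤ Int.fract t + Δ ∧ Int.fract (t + Δ) = Int.fract t + Δ - 1) := by
  have h2 := Int.fract_nonneg t
  have h3 := Int.fract_lt_one t
  have h4 := Int.fract_add_floor t
  rcases lt_or_ge (Int.fract t + Δ) 1 with h | h
  · exact Or.inl ⟨h, Int.fract_eq_iff.2 ⟨by linarith, h, ⌊t⌋, by linarith⟩⟩
  · exact Or.inr ⟨h, Int.fract_eq_iff.2
      ⟨by linarith, by linarith, ⌊t⌋ + 1, by push_cast; linarith⟩⟩

theorem periodicBernoulliTwo_add_sub_le {Δ : ℝ} (h0 : 0 < Δ) (h1 : Δ ≤ 1) (t : ℝ) :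
    periodicBernoulliTwo (t + Δ) - periodicBernoulliTwo t ≤
      2 * Δ * (Int.fract t - 1 / 2 + Δ / 2) := by
  rw [periodicBernoulliTwo, periodicBernoulliTwo]
  rcases fract_add_eq (t := t) h0.le h1 with ⟨_, h⟩ | ⟨_, h⟩ <;> rw [h] <;> nlinarith

theorem le_periodicBernoulliTwo_add_sub {Δ : ℝ} (h0 : 0 < Δ) (h1 : Δ ≤ 1) (t : ℝ) :
    2 * Δ * (Int.fract (t + Δ) - 1 / 2 - Δ / 2) ≤
      periodicBernoulliTwo (t + Δ) - periodicBernoulliTwo t := by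
  rw [periodicBernoulliTwo, periodicBernoulliTwo]
  rcases fract_add_eq (t := t) h0.le h1 with ⟨_, h⟩ | ⟨_, h⟩ <;> rw [h] <;>
    nlinarith [Int.fract_lt_one t]

theorem sqrt_succ_bounds (M : ℕ) :
    0 ≤ √(M : ℝ) ∧ 0 < √((M : ℝ) + 1) ∧ √(M : ℝ) ≤ √((M : ℝ) + 1) ∧
      √((M : ℝ) + 1) ^ 2 = √(M : ℝ) ^ 2 + 1 := by
  refine ⟨by positivity, by positivity, Real.sqrt_le_sqrt (by linarith), ?_⟩
  rw [Real.sq_sqrt (by positivity), Real.sq_sqrt (by positivity)]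

theorem one_div_sqrt_succ_cube_le {M : ℕ} (hM : 1 ≤ M) :
    1 / √((M : ℝ) + 1) ^ 3 ≤ 2 / √(M : ℝ) - 2 / √((M : ℝ) + 1) := by
  obtain ⟨_, h1, h2, h3⟩ := sqrt_succ_bounds M
  have h0 : 0 < √(M : ℝ) := Real.sqrt_pos.2 (by exact_mod_cast hM)
  set s := √(M : ℝ)
  set t := √((M : ℝ) + 1)
  rw [div_sub_div _ _ h0.ne' h1.ne', div_le_div_iff₀ (by positivity) (by positivity)]
  have h4 : s ≤ 2 * t ^ 2 * (t - s) := by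
    have : (t - s) * (t + s) = 1 := by linear_combination h3
    have h5 : 0 ≤ t - s := by linarith
    have h6 : s * 1 ≤ 2 * t ^ 2 * (t - s) := by
      rw [← this]; nlinarith [mul_nonneg h5 h0.le, mul_nonneg h5 h1.le,
        mul_nonneg h5 (by nlinarith : 0 ≤ 2 * t ^ 2 - s * (t + s))]
    linarith
  nlinarith

theorem sum_range_inv_sqrt_cube_le (M : ℕ) :
    ∑ h ∈ range M, 1 / (h : ℝ) ^ 2 * (h * (1 / √(h : ℝ))) ≤ 3 := by
  have key : ∀ M : ℕ, 1 ≤ M → ∑ h ∈ range (M + 1), 1 / (h : ℝ) ^ 2 * (h * (1 / √(h : ℝ))) ≤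
      3 - 2 / √(M : ℝ) := by
    intro M hM
    induction M, hM using Nat.le_induction with
    | base => simp [Finset.sum_range_succ]; norm_num
    | succ M hM ih =>
      rw [Finset.sum_range_succ]
      have h1 := one_div_sqrt_succ_cube_le hM
      obtain ⟨_, h2, _, _⟩ := sqrt_succ_bounds M
      have h3 : √((M : ℝ) + 1) ^ 2 = (M : ℝ) + 1 := Real.sq_sqrt (by positivity)
      push_cast
      have : 1 / ((M : ℝ) + 1) ^ 2 * (((M : ℝ) + 1) * (1 / √((M : ℝ) + 1))) =
          1 / √((M : ℝ) + 1) ^ 3 := by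
        rw [← h3]; simp only [Real.sqrt_sq h2.le]; field_simp
      linarith
  rcases Nat.lt_or_ge M 2 with h | h
  · interval_cases M <;> simp
  · obtain ⟨k, rfl⟩ : ∃ k, M = k + 1 := ⟨M - 1, by omega⟩
    have := key k (by omega)
    have : 0 ≤ 2 / √(k : ℝ) := by positivity
    linarith

theorem sum_range_min_le {H : ℕ} (hH : 1 ≤ H) (M : ℕ) :
    ∑ h ∈ range M, 1 / (h : ℝ) ^ 2 * (min 1 (h / H : ℝ) * √(h : ℝ)) ≤ 4 / √(H : ℝ) := by
  have hH0 : (0 : ℝ) < H := by exact_mod_cast hH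
  have hterm : ∀ M : ℕ, 1 / ((M : ℝ) + 1) ^ 2 * √((M : ℝ) + 1) = 1 / √((M : ℝ) + 1) ^ 3 := by
    intro M
    obtain ⟨_, h2, _, _⟩ := sqrt_succ_bounds M
    have h3 : √((M : ℝ) + 1) ^ 2 = (M : ℝ) + 1 := Real.sq_sqrt (by positivity)
    rw [← h3]; simp only [Real.sqrt_sq h2.le]; field_simp
  have key1 : ∀ M : ℕ, ∑ h ∈ range (M + 1),
      1 / (h : ℝ) ^ 2 * (min 1 (h / H : ℝ) * √(h : ℝ)) ≤ 2 * √(M : ℝ) / H := by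
    intro M
    induction M with
    | zero => simp
    | succ M ih =>
      rw [Finset.sum_range_succ]
      obtain ⟨h1, h2, h4, h5⟩ := sqrt_succ_bounds M
      have h3 : √((M : ℝ) + 1) ^ 2 = (M : ℝ) + 1 := Real.sq_sqrt (by positivity)
      push_cast
      have hb : 1 / ((M : ℝ) + 1) ^ 2 * (min 1 (((M : ℝ) + 1) / H) * √((M : ℝ) + 1)) ≤
          (1 / √((M : ℝ) + 1)) / H := by
        calc _ ≤ 1 / ((M : ℝ) + 1) ^ 2 * ((((M : ℝ) + 1) / H) * √((M : ℝ) + 1)) := by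
              gcongr; exact min_le_right _ _
          _ = _ := by
              rw [← h3]; simp only [Real.sqrt_sq h2.le]; field_simp
      have hc : 1 / √((M : ℝ) + 1) ≤ 2 * √((M : ℝ) + 1) - 2 * √(M : ℝ) := by
        rw [div_le_iff₀ h2]; nlinarith [sq_nonneg (√((M : ℝ) + 1) - √(M : ℝ))]
      have := div_le_div_of_nonneg_right hc hH0.le
      rw [sub_div] at this
      linarith
  have key2 : ∀ M : ℕ, H ≤ M → ∑ h ∈ range (M + 1),
      1 / (h : ℝ) ^ 2 * (min 1 (h / H : ℝ) * √(h : ℝ)) ≤ 4 / √(H : ℝ) - 2 / √(M : ℝ) := by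
    intro M hM
    induction M, hM using Nat.le_induction with
    | base =>
      have h := key1 H
      have : 2 * √(H : ℝ) / H = 4 / √(H : ℝ) - 2 / √(H : ℝ) := by
        have h2 : 0 < √(H : ℝ) := Real.sqrt_pos.2 hH0
        have h3 : √(H : ℝ) ^ 2 = (H : ℝ) := Real.sq_sqrt hH0.le
        rw [← sub_div, div_eq_div_iff hH0.ne' h2.ne']
        linear_combination 2 * h3
      linarith
    | succ M hM ih =>
      rw [Finset.sum_range_succ]
      push_cast
      have h1 := one_div_sqrt_succ_cube_le (hH.trans hM)
      have hb : 1 / ((M : ℝ) + 1) ^ 2 * (min 1 (((M : ℝ) + 1) / H) * √((M : ℝ) + 1)) ≤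
          1 / ((M : ℝ) + 1) ^ 2 * √((M : ℝ) + 1) := by
        gcongr
        exact mul_le_of_le_one_left (by positivity) (min_le_left _ _)
      rw [hterm] at hb
      linarith
  have hmono : ∑ h ∈ range M, 1 / (h : ℝ) ^ 2 * (min 1 (h / H : ℝ) * √(h : ℝ)) ≤
      ∑ h ∈ range (M + H + 1), 1 / (h : ℝ) ^ 2 * (min 1 (h / H : ℝ) * √(h : ℝ)) := by
    refine Finset.sum_le_sum_of_subset_of_nonneg (by intro a; simp; omega) ?_
    intros; positivity
  have := key2 (M + H) (by omega)
  have : 0 ≤ 2 / √((M + H : ℕ) : ℝ) := by positivity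
  linarith

theorem abs_sum_periodicBernoulliTwo_sub_le {s : Finset ℕ} {F : ℕ → ℝ} {P Q : ℝ} {H : ℕ}
    (hH : 1 ≤ H) (hP : 0 ≤ P) (hQ : 0 ≤ Q)
    (hW : ∀ h : ℕ, 1 ≤ h → ∀ c : ℝ,
      |∑ n ∈ s, Real.cos (2 * Real.pi * (h * F n + c))| ≤ P * √(h : ℝ) + Q * (1 / √(h : ℝ)))
    (c : ℝ) :
    |∑ n ∈ s, (periodicBernoulliTwo (F n + c + 1 / H) - periodicBernoulliTwo (F n + c))| ≤
      4 * P / √(H : ℝ) + 3 * Q / H := by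
  have hH0 : (0 : ℝ) < H := by exact_mod_cast hH
  have hpi := Real.pi_gt_three
  have hsum : HasSum (fun h : ℕ => ∑ n ∈ s,
      (1 / (h : ℝ) ^ 2 * Real.cos (2 * Real.pi * h * (F n + c + 1 / H)) -
        1 / (h : ℝ) ^ 2 * Real.cos (2 * Real.pi * h * (F n + c))))
      (∑ n ∈ s, (Real.pi ^ 2 * periodicBernoulliTwo (F n + c + 1 / H) -
        Real.pi ^ 2 * periodicBernoulliTwo (F n + c))) :=
    hasSum_sum fun n _ => (hasSum_cos_div_sq _).sub (hasSum_cos_div_sq _)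
  have hterm : ∀ h : ℕ, |∑ n ∈ s,
      (1 / (h : ℝ) ^ 2 * Real.cos (2 * Real.pi * h * (F n + c + 1 / H)) -
        1 / (h : ℝ) ^ 2 * Real.cos (2 * Real.pi * h * (F n + c)))| ≤
      2 * Real.pi * (P * (1 / (h : ℝ) ^ 2 * (min 1 (h / H : ℝ) * √(h : ℝ))) +
        Q / H * (1 / (h : ℝ) ^ 2 * (h * (1 / √(h : ℝ))))) := by
    intro h
    rcases Nat.eq_zero_or_pos h with rfl | hh
    · simp
    have hh0 : (0 : ℝ) < h := by exact_mod_cast hh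
    have e : ∑ n ∈ s, (1 / (h : ℝ) ^ 2 * Real.cos (2 * Real.pi * h * (F n + c + 1 / H)) -
        1 / (h : ℝ) ^ 2 * Real.cos (2 * Real.pi * h * (F n + c))) =
        1 / (h : ℝ) ^ 2 * (-2 * Real.sin (Real.pi * (h / H)) *
          ∑ n ∈ s, Real.cos (2 * Real.pi * (h * F n + (h * c + h / H / 2 - 1 / 4)))) := by
      rw [Finset.mul_sum, Finset.mul_sum]
      refine Finset.sum_congr rfl fun n _ => ?_
      rw [← mul_sub, Real.cos_sub_cos]
      have e1 : 2 * Real.pi * (h * F n + (h * c + h / H / 2 - 1 / 4)) =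
        (2 * Real.pi * h * (F n + c + 1 / H) + 2 * Real.pi * h * (F n + c)) / 2 - Real.pi / 2 := by
        field_simp; ring
      rw [e1, Real.cos_sub_pi_div_two]
      have e2 : (2 * Real.pi * h * (F n + c + 1 / H) - 2 * Real.pi * h * (F n + c)) / 2 =
        Real.pi * (h / H) := by field_simp; ring
      rw [e2]; ring
    rw [e, abs_mul, abs_mul, abs_mul, abs_of_nonneg (by positivity : 0 ≤ 1 / (h : ℝ) ^ 2)]
    have hsin : |(-2 : ℝ)| * |Real.sin (Real.pi * (h / H))| ≤
        2 * Real.pi * min 1 (h / H : ℝ) := by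
      rw [abs_neg, abs_two, mul_assoc]
      gcongr
      rw [mul_min_of_nonneg _ _ (by positivity)]
      refine le_min ?_ ?_
      · exact (Real.abs_sin_le_one _).trans (by linarith)
      · exact Real.abs_sin_le_abs.trans_eq (abs_of_nonneg (by positivity))
    calc _ ≤ 1 / (h : ℝ) ^ 2 * (2 * Real.pi * min 1 (h / H : ℝ) *
          (P * √(h : ℝ) + Q * (1 / √(h : ℝ)))) := by
          gcongr
          exact hW h hh _
      _ = 2 * Real.pi * (P * (1 / (h : ℝ) ^ 2 * (min 1 (h / H : ℝ) * √(h : ℝ))) +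
        Q * (1 / (h : ℝ) ^ 2 * (min 1 (h / H : ℝ) * (1 / √(h : ℝ))))) := by ring
      _ ≤ 2 * Real.pi * (P * (1 / (h : ℝ) ^ 2 * (min 1 (h / H : ℝ) * √(h : ℝ))) +
        Q * (1 / (h : ℝ) ^ 2 * ((h / H : ℝ) * (1 / √(h : ℝ))))) := by
          gcongr
          exact min_le_right _ _
      _ = _ := by ring
  have hbound : ∀ M : ℕ, |∑ h ∈ range M, ∑ n ∈ s,
      (1 / (h : ℝ) ^ 2 * Real.cos (2 * Real.pi * h * (F n + c + 1 / H)) -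
        1 / (h : ℝ) ^ 2 * Real.cos (2 * Real.pi * h * (F n + c)))| ≤
      2 * Real.pi * (P * (4 / √(H : ℝ)) + Q / H * 3) := by
    intro M
    refine (Finset.abs_sum_le_sum_abs _ _).trans ?_
    refine (Finset.sum_le_sum fun h _ => hterm h).trans ?_
    rw [← Finset.mul_sum, Finset.sum_add_distrib, ← Finset.mul_sum, ← Finset.mul_sum]
    gcongr
    · exact sum_range_min_le hH M
    · exact sum_range_inv_sqrt_cube_le M
  have hlim := le_of_tendsto hsum.tendsto_sum_nat.abs (Eventually.of_forall hbound)
  simp only [← mul_sub] at hlim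
  rw [← Finset.mul_sum, abs_mul, abs_of_nonneg (by positivity)] at hlim
  have hR : 0 ≤ P * (4 / √(H : ℝ)) + Q / H * 3 := by positivity
  have hX := abs_nonneg (∑ n ∈ s,
    (periodicBernoulliTwo (F n + c + 1 / H) - periodicBernoulliTwo (F n + c)))
  have e : 4 * P / √(H : ℝ) + 3 * Q / H = P * (4 / √(H : ℝ)) + Q / H * 3 := by ring
  rw [e]
  have : Real.pi * |∑ n ∈ s,
    (periodicBernoulliTwo (F n + c + 1 / H) - periodicBernoulliTwo (F n + c))| ≤
      2 * (P * (4 / √(H : ℝ)) + Q / H * 3) := by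
    refine le_of_mul_le_mul_left ?_ Real.pi_pos
    linarith
  nlinarith

/-- Bounds for the trigonometric sums of `h * F` for all `h ≥ 1` yield a bound for the sum of the
sawtooth function along `F`. -/
theorem abs_sum_fract_sub_half_le {s : Finset ℕ} {F : ℕ → ℝ} {P Q : ℝ} {H : ℕ}
    (hH : 1 ≤ H) (hP : 0 ≤ P) (hQ : 0 ≤ Q)
    (hW : ∀ h : ℕ, 1 ≤ h → ∀ c : ℝ,
      |∑ n ∈ s, Real.cos (2 * Real.pi * (h * F n + c))| ≤ P * √(h : ℝ) + Q * (1 / √(h : ℝ))) :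
    |∑ n ∈ s, (Int.fract (F n) - 1 / 2)| ≤ s.card / H + 2 * P * √(H : ℝ) + 2 * Q := by
  have hH0 : (0 : ℝ) < H := by exact_mod_cast hH
  have hΔ : (0 : ℝ) < 1 / H := by positivity
  have hΔ1 : (1 : ℝ) / H ≤ 1 := by
    rw [div_le_one hH0]; exact_mod_cast hH
  have hu := abs_sum_periodicBernoulliTwo_sub_le hH hP hQ hW 0
  have hl := abs_sum_periodicBernoulliTwo_sub_le hH hP hQ hW (-(1 / H))
  have h1 := Finset.sum_le_sum fun n (_ : n ∈ s) =>
    periodicBernoulliTwo_add_sub_le hΔ hΔ1 (F n + 0)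
  have h2 := Finset.sum_le_sum fun n (_ : n ∈ s) =>
    le_periodicBernoulliTwo_add_sub hΔ hΔ1 (F n + -(1 / H))
  rw [← Finset.mul_sum] at h1 h2
  simp only [add_zero, neg_add_cancel_right] at *
  rw [Finset.sum_add_distrib, Finset.sum_const, nsmul_eq_mul] at h1
  rw [Finset.sum_sub_distrib _ (fun _ => (1 : ℝ) / H / 2), Finset.sum_const, nsmul_eq_mul] at h2
  set T := ∑ n ∈ s, (Int.fract (F n) - 1 / 2)
  have e1 : 4 * P / √(H : ℝ) + 3 * Q / H = 2 * (1 / H) * (2 * P * √(H : ℝ) + 3 / 2 * Q) := by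
    have h2 : 0 < √(H : ℝ) := Real.sqrt_pos.2 hH0
    have h3 : √(H : ℝ) ^ 2 = (H : ℝ) := Real.sq_sqrt hH0.le
    have : 1 / √(H : ℝ) = 1 / H * √(H : ℝ) := by field_simp; exact h3.symm
    linear_combination 4 * P * this
  have e2 : (s.card : ℝ) * (1 / H / 2) = s.card / H / 2 := by ring
  rw [e1] at hu hl
  rw [e2] at h1 h2
  have hcard : 0 ≤ (s.card : ℝ) / H := by positivity
  have hpos : (0 : ℝ) < 2 * (1 / H) := by positivity
  have h3 : -(2 * P * √(H : ℝ) + 3 / 2 * Q) ≤ T + s.card / H / 2 := by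
    refine le_of_mul_le_mul_left ?_ hpos
    rw [mul_neg]
    exact (neg_le_neg hu).trans ((neg_abs_le _).trans h1)
  have h4 := le_of_mul_le_mul_left (h2.trans ((le_abs_self _).trans hl)) hpos
  rw [abs_le]
  constructor <;> linarith

theorem abs_sum_fract_sub_half_le_card (s : Finset ℕ) (F : ℕ → ℝ) :
    |∑ n ∈ s, (Int.fract (F n) - 1 / 2)| ≤ s.card := by
  refine (Finset.abs_sum_le_sum_abs _ _).trans ?_
  refine (Finset.sum_le_card_nsmul _ _ 1 fun n _ => ?_).trans (by simp)
  have h1 := Int.fract_nonneg (F n)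
  have h2 := Int.fract_lt_one (F n)
  rw [abs_le]
  constructor <;> linarith

/-- The sawtooth sum of `Y ^ 3 / (l + θ) + c` over `K / 2 < l ≤ K` is `O(Y)` for `K ^ 2 ≤ Y ^ 3`. -/
theorem abs_sum_fract_div_dyadic_le {Y θ : ℝ} (c : ℝ) {K : ℕ} (hY : 1 ≤ Y) (h0 : 0 ≤ θ)
    (h1 : θ ≤ 1) (hK1 : 1 ≤ K) (hK : (K : ℝ) ^ 2 ≤ Y ^ 3) :
    |∑ l ∈ Ico (K / 2 + 1) (K + 1), (Int.fract (Y ^ 3 / (l + θ) + c) - 1 / 2)| ≤ 1700 * Y := by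
  have hcardN : (Ico (K / 2 + 1) (K + 1)).card ≤ K := by rw [Nat.card_Ico]; omega
  have hcard : ((Ico (K / 2 + 1) (K + 1)).card : ℝ) ≤ K := by exact_mod_cast hcardN
  rcases le_or_gt (K : ℝ) Y with hKY | hKY
  · refine (abs_sum_fract_sub_half_le_card _ _).trans ?_
    linarith
  have hK0 : (0 : ℝ) < K := by exact_mod_cast hK1
  have hY0 : 0 < Y := by linarith
  set κ := √(Y ^ 3 / (32 * (K : ℝ) ^ 3)) with hκ
  have hκ0 : 0 < κ := Real.sqrt_pos.2 (by positivity)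
  have hκ2 : κ ^ 2 = Y ^ 3 / (32 * (K : ℝ) ^ 3) := Real.sq_sqrt (by positivity)
  set H := ⌈(K : ℝ) / Y⌉₊ with hH
  have hKYpos : 0 < (K : ℝ) / Y := by positivity
  have hH1 : 1 ≤ H := Nat.ceil_pos.2 hKYpos
  have hHlo : (K : ℝ) / Y ≤ H := Nat.le_ceil _
  have hHhi : (H : ℝ) ≤ 2 * (K / Y) := by
    have := Nat.ceil_lt_add_one hKYpos.le
    have : 1 ≤ (K : ℝ) / Y := by rw [le_div_iff₀ hY0]; linarith
    linarith
  have hH0 : (0 : ℝ) < H := by exact_mod_cast hH1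
  have hmain := abs_sum_fract_sub_half_le (s := Ico (K / 2 + 1) (K + 1))
    (F := fun l => Y ^ 3 / (l + θ) + c) (P := 3072 * K * κ) (Q := 12 * (1 / κ)) hH1
    (by positivity) (by positivity) (by
      intro h hh c'
      have hh0 : (0 : ℝ) < h := by exact_mod_cast hh
      have hdiff : ∀ l : ℕ, K / 2 + 1 ≤ l →
          (h * (Y ^ 3 / ((l + 2 : ℕ) + θ) + c) + c') -
            2 * (h * (Y ^ 3 / ((l + 1 : ℕ) + θ) + c) + c') + (h * (Y ^ 3 / (l + θ) + c) + c') =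
          2 * h * Y ^ 3 / ((l + θ) * (l + θ + 1) * (l + θ + 2)) := by
        intro l hl
        have hl0 : (0 : ℝ) < l := by exact_mod_cast (by omega : 0 < l)
        push_cast
        have e1 : (l : ℝ) + θ ≠ 0 := by positivity
        have e2 : (l : ℝ) + 1 + θ ≠ 0 := by positivity
        have e3 : (l : ℝ) + 2 + θ ≠ 0 := by positivity
        have e4 : (l : ℝ) + θ + 1 ≠ 0 := by positivity
        have e5 : (l : ℝ) + θ + 2 ≠ 0 := by positivity
        field_simp
        ring
      have hll : 0 < (h : ℝ) * κ ^ 2 := by positivity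
      have hsqrt : √((h : ℝ) * κ ^ 2) = √(h : ℝ) * κ := by
        rw [Real.sqrt_mul hh0.le, Real.sqrt_sq hκ0.le]
      have ht := abs_sum_cos_le_of_second_diff
        (f := fun l => h * (Y ^ 3 / (l + θ) + c) + c') (l := h * κ ^ 2) (A := 512)
        (a := K / 2 + 1) (b := K + 1) hll (by norm_num) (by
          intro l ha hb
          have hl0 : (0 : ℝ) < l := by exact_mod_cast (by omega : 0 < l)
          have hl2 : (l : ℝ) ≤ K := by exact_mod_cast (by omega : l ≤ K)
          have hK1' : (1 : ℝ) ≤ K := by exact_mod_cast hK1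
          rw [hdiff l ha, hκ2]
          have : (l + θ) * (l + θ + 1) * (l + θ + 2) ≤ (4 * K) * (4 * K) * (4 * (K : ℝ)) := by
            gcongr <;> linarith
          calc h * (Y ^ 3 / (32 * (K : ℝ) ^ 3)) = 2 * h * Y ^ 3 / ((4 * K) * (4 * K) * (4 * K)) := by
                field_simp; norm_num
            _ ≤ _ := by gcongr) (by
          intro l ha hb
          have hl0 : (0 : ℝ) < l := by exact_mod_cast (by omega : 0 < l)
          have hl2 : (K : ℝ) / 2 ≤ l := by
            have : (K : ℝ) ≤ 2 * l := by exact_mod_cast (by omega : K ≤ 2 * l)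
            linarith
          rw [hdiff l ha, hκ2]
          have : (K / 2 : ℝ) * (K / 2) * (K / 2) ≤ (l + θ) * (l + θ + 1) * (l + θ + 2) := by
            gcongr <;> linarith
          calc _ ≤ 2 * h * Y ^ 3 / ((K / 2 : ℝ) * (K / 2) * (K / 2)) := by gcongr
            _ = 512 * (h * (Y ^ 3 / (32 * (K : ℝ) ^ 3))) := by field_simp; norm_num)
      refine ht.trans ?_
      rw [hsqrt]
      have hN : ((K + 1 - (K / 2 + 1) : ℕ) : ℝ) ≤ K := by exact_mod_cast (by omega)
      have e : 12 * (1 / (√(h : ℝ) * κ)) = 12 * (1 / κ) * (1 / √(h : ℝ)) := by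
        rw [one_div, mul_inv]; ring
      rw [e]
      have : (6 : ℝ) * 512 * (K + 1 - (K / 2 + 1) : ℕ) * (√(h : ℝ) * κ) ≤
          6 * 512 * K * (√(h : ℝ) * κ) := by gcongr
      linarith)
  refine hmain.trans ?_
  have b1 : ((Ico (K / 2 + 1) (K + 1)).card : ℝ) / H ≤ Y := by
    rw [div_le_iff₀ hH0]
    rw [div_le_iff₀ hY0] at hHlo
    linarith
  have b2 : κ * √(H : ℝ) ≤ Y / (4 * K) := by
    refine (pow_le_pow_iff_left₀ (by positivity) (by positivity) two_ne_zero).1 ?_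
    rw [mul_pow, Real.sq_sqrt hH0.le, hκ2]
    calc Y ^ 3 / (32 * (K : ℝ) ^ 3) * H ≤ Y ^ 3 / (32 * (K : ℝ) ^ 3) * (2 * (K / Y)) := by gcongr
      _ = (Y / (4 * K)) ^ 2 := by field_simp; norm_num
  have b3 : 1 / κ ≤ 6 * Y := by
    rw [div_le_iff₀ hκ0]
    refine (pow_le_pow_iff_left₀ (by positivity) (by positivity) two_ne_zero).1 ?_
    rw [mul_pow, hκ2, ← mul_div_assoc, le_div_iff₀ (by positivity)]
    have hKY2 : (K : ℝ) ≤ Y ^ 2 := by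
      refine (pow_le_pow_iff_left₀ hK0.le (by positivity) two_ne_zero).1 ?_
      nlinarith [pow_pos hY0 3]
    have : (K : ℝ) ^ 2 * K ≤ Y ^ 3 * Y ^ 2 := by gcongr
    nlinarith [pow_pos hY0 5]
  have b4 : 2 * (3072 * K * κ) * √(H : ℝ) ≤ 1536 * Y := by
    calc 2 * (3072 * K * κ) * √(H : ℝ) = 6144 * K * (κ * √(H : ℝ)) := by ring
      _ ≤ 6144 * K * (Y / (4 * K)) := by gcongr
      _ = 1536 * Y := by field_simp; norm_num
  linarith

theorem abs_sum_fract_div_le_log {Y θ : ℝ} (c : ℝ) (hY : 1 ≤ Y) (h0 : 0 ≤ θ)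
    (h1 : θ ≤ 1) (K : ℕ) (hK : (K : ℝ) ^ 2 ≤ Y ^ 3) :
    |∑ l ∈ Icc 1 K, (Int.fract (Y ^ 3 / (l + θ) + c) - 1 / 2)| ≤
      1700 * Y * Nat.log 2 (2 * K) := by
  induction K using Nat.strong_induction_on with
  | _ K ih =>
    rcases Nat.eq_zero_or_pos K with rfl | hK1
    · simp
    have hle : ((K / 2 : ℕ) : ℝ) ≤ K := by exact_mod_cast Nat.div_le_self K 2
    have hih := ih (K / 2) (by omega) (by
      refine le_trans ?_ hK
      gcongr)
    have hb := abs_sum_fract_div_dyadic_le c hY h0 h1 hK1 hK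
    have e : Icc 1 K = Ico 1 (K + 1) := rfl
    have e' : Icc 1 (K / 2) = Ico 1 (K / 2 + 1) := rfl
    rw [e, ← Finset.sum_Ico_consecutive _ (by omega : 1 ≤ K / 2 + 1)
      (by omega : K / 2 + 1 ≤ K + 1), ← e']
    have hlog : Nat.log 2 (2 * (K / 2)) + 1 ≤ Nat.log 2 (2 * K) := by
      have : Nat.log 2 (2 * K) = Nat.log 2 K + 1 := by
        rw [mul_comm]; exact Nat.log_mul_base (by norm_num) (by omega)
      rw [this]
      gcongr
      omega
    have hlog' : (Nat.log 2 (2 * (K / 2)) : ℝ) + 1 ≤ Nat.log 2 (2 * K) := by exact_mod_cast hlog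
    calc _ ≤ _ := abs_add_le _ _
      _ ≤ 1700 * Y * Nat.log 2 (2 * (K / 2)) + 1700 * Y := add_le_add hih hb
      _ = 1700 * Y * (Nat.log 2 (2 * (K / 2)) + 1) := by ring
      _ ≤ _ := by gcongr

theorem abs_sum_fract_div_le {y θ : ℝ} (c : ℝ) (hy : 1 ≤ y) (h0 : 0 ≤ θ)
    (h1 : θ ≤ 1) {K : ℕ} (hK : (K : ℝ) ^ 2 ≤ y) :
    |∑ l ∈ Icc 1 K, (Int.fract (y / (l + θ) + c) - 1 / 2)| ≤
      1700 * y ^ ((1 : ℝ) / 3) * (1 + 2 * Real.log y) := by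
  have hy3 : (y ^ ((1 : ℝ) / 3)) ^ 3 = y := by
    rw [← Real.rpow_natCast, ← Real.rpow_mul (by linarith)]; norm_num
  have hY : 1 ≤ y ^ ((1 : ℝ) / 3) := Real.one_le_rpow hy (by norm_num)
  have h := abs_sum_fract_div_le_log c hY h0 h1 K (by rwa [hy3])
  rw [hy3] at h
  refine h.trans ?_
  have hly : 0 ≤ Real.log y := Real.log_nonneg hy
  gcongr
  rcases Nat.eq_zero_or_pos K with rfl | hK1
  · simp; linarith
  have hKr : (1 : ℝ) ≤ K := by exact_mod_cast hK1
  have hp : (2 : ℝ) ^ Nat.log 2 (2 * K) ≤ 2 * K := by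
    exact_mod_cast Nat.pow_log_le_self 2 (by omega : 2 * K ≠ 0)
  have hl := Real.log_le_log (by positivity) hp
  rw [Real.log_pow, Real.log_mul (by norm_num) (by positivity)] at hl
  have hK' : Real.log K ≤ Real.log y := Real.log_le_log (by linarith) (by nlinarith)
  have h2 := Real.log_two_gt_d9
  have h2' := Real.log_two_lt_d9
  nlinarith

theorem totient_div_eq_sum_moebius_div {m : ℕ} (hm : 0 < m) :
    (Nat.totient m : ℝ) / m = ∑ d ∈ m.divisors, (ArithmeticFunction.moebius d : ℝ) / d := by
  have h := (ArithmeticFunction.sum_eq_iff_sum_mul_moebius_eq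
    (f := fun n => (Nat.totient n : ℝ)) (g := fun n => (n : ℝ))).1
    (fun n _ => by exact_mod_cast Nat.sum_totient n) m hm
  have hm0 : (m : ℝ) ≠ 0 := by exact_mod_cast hm.ne'
  rw [← h, Nat.sum_divisorsAntidiagonal
    (f := fun a b => (ArithmeticFunction.moebius a : ℝ) * (b : ℝ)), Finset.sum_div]
  refine Finset.sum_congr rfl fun d hd => ?_
  have hdm := Nat.dvd_of_mem_divisors hd
  have hd0 : (d : ℝ) ≠ 0 := by exact_mod_cast (Nat.pos_of_mem_divisors hd).ne'
  rw [Nat.cast_div hdm hd0]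
  field_simp

theorem indicator_dvd_floor_eq {t : ℝ} (ht : 1 ≤ t) {d : ℕ} (hd : 0 < d) :
    (if d ∣ ⌊t⌋₊ then 1 else 0 : ℝ) = 1 / d - Int.fract (t / d) + Int.fract (t / d - 1 / d) := by
  have hd0 : (d : ℝ) ≠ 0 := by exact_mod_cast hd.ne'
  have e : t / d - 1 / d = (t - 1) / d := by ring
  have f1 : (⌊t / d⌋ : ℝ) = ((⌊t⌋₊ / d : ℕ) : ℝ) := by
    rw [← Nat.floor_div_natCast, natCast_floor_eq_intCast_floor (by positivity)]
  have f2 : (⌊(t - 1) / d⌋ : ℝ) = (((⌊t⌋₊ - 1) / d : ℕ) : ℝ) := by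
    rw [← Nat.floor_sub_one, ← Nat.floor_div_natCast,
      natCast_floor_eq_intCast_floor (div_nonneg (by linarith) (by positivity))]
  rw [e, Int.fract, Int.fract, f1, f2]
  have hm : 1 ≤ ⌊t⌋₊ := Nat.one_le_floor_iff _ |>.2 ht
  obtain ⟨k, hk⟩ : ∃ k, ⌊t⌋₊ = k + 1 := ⟨⌊t⌋₊ - 1, by omega⟩
  rw [hk, Nat.add_sub_cancel, Nat.succ_div]
  push_cast
  field_simp
  ring

theorem card_filter_floor_div_eq {x : ℝ} (hx : 0 ≤ x) {m : ℕ} (hm : 0 < m) :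
    ((filter (fun n : ℕ => ⌊x / n⌋₊ = m) (Icc 1 ⌊x⌋₊)).card : ℝ) =
      (⌊x / m⌋ : ℝ) - ⌊x / (m + 1)⌋ := by
  have hm0 : (0 : ℝ) < m := by exact_mod_cast hm
  have hset : filter (fun n : ℕ => ⌊x / n⌋₊ = m) (Icc 1 ⌊x⌋₊) =
      Ioc ⌊x / (m + 1)⌋₊ ⌊x / m⌋₊ := by
    ext n
    simp only [mem_filter, Finset.mem_Icc, Finset.mem_Ioc]
    rcases Nat.eq_zero_or_pos n with rfl | hn
    · simp
    have hn0 : (0 : ℝ) < n := by exact_mod_cast hn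
    rw [Nat.floor_eq_iff (by positivity), Nat.floor_lt (by positivity),
      Nat.le_floor_iff hx, Nat.le_floor_iff (by positivity), le_div_iff₀ hn0, div_lt_iff₀ hn0,
      div_lt_iff₀ (by positivity), le_div_iff₀ hm0]
    have hm1 : (1 : ℝ) ≤ m := by exact_mod_cast hm
    constructor
    · rintro ⟨_, h1, h2⟩
      constructor <;> linarith
    · rintro ⟨h1, h2⟩
      refine ⟨⟨hn, by nlinarith⟩, ?_, ?_⟩ <;> linarith
  have hle : ⌊x / (m + 1)⌋₊ ≤ ⌊x / m⌋₊ := by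
    apply Nat.floor_le_floor
    gcongr
    linarith
  rw [hset, Nat.card_Ioc, Nat.cast_sub hle, natCast_floor_eq_intCast_floor (by positivity),
    natCast_floor_eq_intCast_floor (by positivity)]

theorem indicator_dvd_eq_add_sum {d m : ℕ} (hd : 0 < d) (hm : 0 < m) (B : ℕ) :
    (if d ∣ m then 1 else 0 : ℝ) = (if d * (B + 1) ≤ m ∧ d ∣ m then 1 else 0) +
      ∑ l ∈ Icc 1 B, if m = d * l then 1 else 0 := by
  by_cases h : d ∣ m
  swap
  · rw [if_neg h, if_neg (fun h' => h h'.2), Finset.sum_eq_zero, add_zero]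
    intro l _
    rw [if_neg]
    rintro rfl
    exact h (dvd_mul_right _ _)
  obtain ⟨k, rfl⟩ := h
  have hk : 0 < k := Nat.pos_of_mul_pos_left hm
  have e : ∀ l, (d * k = d * l) ↔ k = l := fun l => Nat.mul_right_inj hd.ne'
  simp only [e, Nat.mul_le_mul_left_iff hd, dvd_mul_right, and_true, if_true,
    Finset.sum_ite_eq, Finset.mem_Icc]
  by_cases hB : B + 1 ≤ k
  · rw [if_pos hB, if_neg (by omega)]; simp
  · rw [if_neg hB, if_pos (by omega)]; simp

/-- Hyperbola method for the number of `n ≤ x` with `d ∣ ⌊x / n⌋`. -/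
theorem card_filter_dvd_floor_div_eq {x : ℝ} (hx : 0 ≤ x) {d : ℕ} (hd : 0 < d) (B : ℕ) :
    ((filter (fun n : ℕ => d ∣ ⌊x / n⌋₊) (Icc 1 ⌊x⌋₊)).card : ℝ) =
      ∑ n ∈ Icc 1 ⌊x / d / (B + 1)⌋₊, (if d ∣ ⌊x / n⌋₊ then 1 else 0 : ℝ) +
      ∑ l ∈ Icc 1 B, ((filter (fun n : ℕ => ⌊x / n⌋₊ = d * l) (Icc 1 ⌊x⌋₊)).card : ℝ) := by
  have hd0 : (0 : ℝ) < d := by exact_mod_cast hd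
  have hd1 : (1 : ℝ) ≤ d := by exact_mod_cast hd
  have hfloor : ∀ n ∈ Icc 1 ⌊x⌋₊, 0 < ⌊x / n⌋₊ ∧
      (d * (B + 1) ≤ ⌊x / n⌋₊ ↔ n ≤ ⌊x / d / (B + 1)⌋₊) := by
    intro n hn
    rw [Finset.mem_Icc, Nat.le_floor_iff hx] at hn
    have hn0 : (0 : ℝ) < n := by exact_mod_cast hn.1
    constructor
    · rw [Nat.floor_pos, le_div_iff₀ hn0]; linarith
    · rw [Nat.le_floor_iff (by positivity), Nat.le_floor_iff (by positivity), le_div_iff₀ hn0,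
        div_div, le_div_iff₀ (by positivity)]
      push_cast
      rw [mul_comm]
  have hN : ⌊x / d / (B + 1)⌋₊ ≤ ⌊x⌋₊ := by
    apply Nat.floor_le_floor
    rw [div_div]
    apply div_le_self hx
    have : (0 : ℝ) ≤ B := by positivity
    nlinarith
  simp only [Finset.card_filter, Nat.cast_sum, Nat.cast_ite, Nat.cast_one, Nat.cast_zero]
  rw [Finset.sum_comm, Finset.sum_congr rfl fun n hn =>
    indicator_dvd_eq_add_sum hd (hfloor n hn).1 B, Finset.sum_add_distrib]
  congr 1
  have hite : ∀ n ∈ Icc 1 ⌊x⌋₊, (if d * (B + 1) ≤ ⌊x / n⌋₊ ∧ d ∣ ⌊x / n⌋₊ then 1 else 0 : ℝ) =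
      if n ≤ ⌊x / d / (B + 1)⌋₊ then (if d ∣ ⌊x / n⌋₊ then 1 else 0) else 0 := by
    intro n hn
    simp only [(hfloor n hn).2, ite_and]
  rw [Finset.sum_congr rfl hite, ← Finset.sum_filter]
  congr 1
  ext n
  simp only [mem_filter, Finset.mem_Icc]
  omega

theorem sum_Ioc_div_mul_bounds {x : ℝ} (hx : 0 ≤ x) {d B J : ℕ} (hd : 0 < d) (hB : 1 ≤ B)
    (hBJ : B ≤ J) :
    x / d ^ 2 * (1 / (B + 1) - 1 / (J + 1)) ≤
        ∑ l ∈ Ioc B J, x / ((d * l : ℝ) * (d * l + 1)) ∧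
      ∑ l ∈ Ioc B J, x / ((d * l : ℝ) * (d * l + 1)) ≤ x / d ^ 2 * (1 / B - 1 / J) := by
  have hd1 : (1 : ℝ) ≤ d := by exact_mod_cast hd
  have hd0 : (0 : ℝ) < d := by linarith
  induction J, hBJ using Nat.le_induction with
  | base => simp
  | succ J hJ ih =>
    have hJ0 : (0 : ℝ) < J := by exact_mod_cast (by omega : 0 < J)
    rw [Finset.sum_Ioc_succ_top hJ]
    push_cast
    have l1 : x / d ^ 2 * (1 / (J + 1) - 1 / (J + 1 + 1)) ≤
        x / ((d * (J + 1) : ℝ) * (d * (J + 1) + 1)) := by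
      have : x / (d : ℝ) ^ 2 * (1 / (J + 1) - 1 / (J + 1 + 1)) =
          x / (d * (J + 1) * (d * (J + 1 + 1))) := by field_simp; ring
      rw [this]
      gcongr
      linarith
    have l2 : x / ((d * (J + 1) : ℝ) * (d * (J + 1) + 1)) ≤
        x / d ^ 2 * (1 / J - 1 / (J + 1)) := by
      have : x / (d : ℝ) ^ 2 * (1 / J - 1 / (J + 1)) = x / (d * (J + 1) * (d * J)) := by
        field_simp; ring
      rw [this]
      gcongr
      linarith
    constructor <;> nlinarith [ih.1, ih.2]

theorem abs_floor_div_sub_sum_Ioc_le {x : ℝ} (hx : 0 ≤ x) {d B : ℕ} (hd : 0 < d) (hB : 1 ≤ B)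
    (hlo : (B : ℝ) ^ 2 ≤ x / d) (hhi : x / d ≤ (B + 1 : ℝ) ^ 2) :
    |(⌊x / d / (B + 1)⌋₊ : ℝ) / d - ∑ l ∈ Ioc B ⌊x / d⌋₊, x / ((d * l : ℝ) * (d * l + 1))| ≤ 3 := by
  have hd1 : (1 : ℝ) ≤ d := by exact_mod_cast hd
  have hd0 : (0 : ℝ) < d := by linarith
  have hB1 : (1 : ℝ) ≤ B := by exact_mod_cast hB
  have e0 : x / (d : ℝ) ^ 2 = x / d / d := by field_simp
  obtain ⟨t1, t2⟩ := sum_Ioc_div_mul_bounds hx hd hB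
    (Nat.le_floor (by nlinarith) : B ≤ ⌊x / (d : ℝ)⌋₊)
  rw [e0] at t1 t2
  set y := x / d
  have hy0 : 0 ≤ y := by positivity
  have hNle : (⌊y / (B + 1)⌋₊ : ℝ) ≤ y / (B + 1) := Nat.floor_le (by positivity)
  have hNlt : y / (B + 1) < ⌊y / (B + 1)⌋₊ + 1 := Nat.lt_floor_add_one _
  have hJlt : y < ⌊y⌋₊ + 1 := Nat.lt_floor_add_one _
  set N : ℝ := (⌊y / (B + 1)⌋₊ : ℝ)
  have hinv : 1 / (d : ℝ) ≤ 1 := by rw [div_le_one hd0]; exact hd1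
  have hinv0 : 0 ≤ 1 / (d : ℝ) := by positivity
  have u1 : y / d * (1 / (B + 1) - 1 / (⌊y⌋₊ + 1)) =
      1 / d * (y / (B + 1) - y / (⌊y⌋₊ + 1)) := by ring
  have u2 : y / d * (1 / B - 1 / ⌊y⌋₊) ≤ 1 / d * (y / B) := by
    have : 0 ≤ y / d * (1 / (⌊y⌋₊ : ℝ)) := by positivity
    have : y / d * (1 / B - 1 / ⌊y⌋₊) = 1 / d * (y / B) - y / d * (1 / (⌊y⌋₊ : ℝ)) := by ring
    linarith
  have u3 : y / (⌊y⌋₊ + 1) ≤ 1 := by rw [div_le_one (by positivity)]; exact hJlt.le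
  have u4 : y / B ≤ y / (B + 1) + 2 := by
    have : y / B - y / (B + 1) = y / (B * (B + 1)) := by field_simp; ring
    have : y / (B * (B + 1)) ≤ 2 := by
      rw [div_le_iff₀ (by positivity)]; nlinarith
    linarith
  have u5 : N / d = 1 / d * N := by ring
  have v1 : 1 / (d : ℝ) * (N - 1) ≤ 1 / d * (y / (B + 1) - y / (⌊y⌋₊ + 1)) :=
    mul_le_mul_of_nonneg_left (by linarith) hinv0
  have v2 : 1 / (d : ℝ) * (y / B) ≤ 1 / d * (N + 3) :=
    mul_le_mul_of_nonneg_left (by linarith) hinv0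
  rw [abs_le, u5]
  constructor <;> linarith

/-- The number of `n ≤ x` with `d ∣ ⌊x / n⌋` equals its expected value up to
`O((x / d) ^ (1 / 3) * log x)`. -/
theorem abs_card_filter_dvd_floor_div_sub_le {x : ℝ} {d : ℕ} (hd : 0 < d) (hdx : (d : ℝ) ≤ x) :
    |((filter (fun n : ℕ => d ∣ ⌊x / n⌋₊) (Icc 1 ⌊x⌋₊)).card : ℝ) -
      ∑ l ∈ Icc 1 (⌊x⌋₊ / d), x / ((d * l : ℝ) * (d * l + 1))| ≤
      6803 * (x / d) ^ ((1 : ℝ) / 3) * (1 + 2 * Real.log (x / d)) := by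
  have hd1 : (1 : ℝ) ≤ d := by exact_mod_cast hd
  have hd0 : (0 : ℝ) < d := by linarith
  have hx : 0 ≤ x := by linarith
  set y := x / d with hy
  have hxy : x = d * y := by rw [hy]; field_simp
  have hy1 : 1 ≤ y := by rw [hy, le_div_iff₀ hd0]; linarith
  set B := ⌊√y⌋₊ with hB
  have hsq : √y ^ 2 = y := Real.sq_sqrt (by linarith)
  have hs1 : 1 ≤ √y := Real.one_le_sqrt.2 hy1
  have hB1 : 1 ≤ B := (Nat.one_le_floor_iff _).2 hs1
  have hB1' : (1 : ℝ) ≤ B := by exact_mod_cast hB1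
  have hBle : (B : ℝ) ≤ √y := Nat.floor_le (by positivity)
  have hBlt : √y < B + 1 := Nat.lt_floor_add_one _
  have hBsq : (B : ℝ) ^ 2 ≤ y := by rw [← hsq]; gcongr
  have hBsq' : y ≤ (B + 1 : ℝ) ^ 2 := by rw [← hsq]; gcongr
  set N := ⌊y / (B + 1)⌋₊ with hN
  have hNle : (N : ℝ) ≤ y / (B + 1) := Nat.floor_le (by positivity)
  have hNsq : (N : ℝ) ^ 2 ≤ y := by
    have : (N : ℝ) ≤ √y := by
      refine hNle.trans ?_
      rw [div_le_iff₀ (by positivity)]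
      nlinarith
    rw [← hsq]; gcongr
  have hJ : ⌊x⌋₊ / d = ⌊y⌋₊ := (Nat.floor_div_natCast x d).symm
  have hBJ : B ≤ ⌊y⌋₊ := Nat.le_floor (by nlinarith)
  rw [hJ, card_filter_dvd_floor_div_eq hx hd B, ← hy]
  have hsmall : ∑ n ∈ Icc 1 N, (if d ∣ ⌊x / n⌋₊ then 1 else 0 : ℝ) = N / d -
      ∑ n ∈ Icc 1 N, (Int.fract (y / (n + 0) + 0) - 1 / 2) +
      ∑ n ∈ Icc 1 N, (Int.fract (y / (n + 0) + -(1 / d)) - 1 / 2) := by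
    have : (N : ℝ) / d = ∑ n ∈ Icc 1 N, 1 / (d : ℝ) := by simp [div_eq_mul_inv]
    rw [this, ← Finset.sum_sub_distrib, ← Finset.sum_add_distrib]
    refine Finset.sum_congr rfl fun n hn => ?_
    rw [Finset.mem_Icc] at hn
    have hn0 : (0 : ℝ) < n := by exact_mod_cast hn.1
    have hny : (n : ℝ) ≤ y := by
      have : (n : ℝ) ≤ N := by exact_mod_cast hn.2
      have : y / (B + 1) ≤ y := div_le_self (by linarith) (by linarith)
      linarith
    rw [indicator_dvd_floor_eq (by rw [le_div_iff₀ hn0, hxy]; nlinarith) hd]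
    have e : x / n / d = y / n := by rw [hxy]; field_simp
    rw [e, add_zero, add_zero, ← sub_eq_add_neg]
    ring
  have hlarge : ∑ l ∈ Icc 1 B,
      ((filter (fun n : ℕ => ⌊x / n⌋₊ = d * l) (Icc 1 ⌊x⌋₊)).card : ℝ) =
      ∑ l ∈ Icc 1 B, x / ((d * l : ℝ) * (d * l + 1)) -
      ∑ l ∈ Icc 1 B, (Int.fract (y / (l + 0) + 0) - 1 / 2) +
      ∑ l ∈ Icc 1 B, (Int.fract (y / (l + 1 / d) + 0) - 1 / 2) := by
    rw [← Finset.sum_sub_distrib, ← Finset.sum_add_distrib]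
    refine Finset.sum_congr rfl fun l hl => ?_
    rw [Finset.mem_Icc] at hl
    have hl0 : (0 : ℝ) < l := by exact_mod_cast hl.1
    rw [card_filter_floor_div_eq hx (Nat.mul_pos hd hl.1)]
    push_cast
    have e1 : x / (d * l) = y / l := by rw [hxy]; field_simp
    have e2 : x / (d * l + 1) = y / (l + 1 / d) := by rw [hxy]; field_simp
    have e3 : x / ((d * l : ℝ) * (d * l + 1)) = y / l - y / (l + 1 / d) := by
      rw [← e1, ← e2]; field_simp; ring
    rw [e1, e2, e3, add_zero, add_zero, add_zero, Int.fract, Int.fract]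
    ring
  have hsplit : ∑ l ∈ Icc 1 ⌊y⌋₊, x / ((d * l : ℝ) * (d * l + 1)) =
      ∑ l ∈ Icc 1 B, x / ((d * l : ℝ) * (d * l + 1)) +
      ∑ l ∈ Ioc B ⌊y⌋₊, x / ((d * l : ℝ) * (d * l + 1)) := by
    have e : ∀ M, Icc 1 M = Ioc 0 M := fun _ => rfl
    rw [e, e, Finset.sum_Ioc_consecutive _ (Nat.zero_le _) hBJ]
  have htail := abs_floor_div_sub_sum_Ioc_le hx hd hB1 hBsq hBsq'
  rw [← hy, ← hN] at htail
  have hinv0 : 0 ≤ 1 / (d : ℝ) := by positivity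
  have hinv : 1 / (d : ℝ) ≤ 1 := by rw [div_le_one hd0]; exact hd1
  have b1 := abs_sum_fract_div_le 0 hy1 le_rfl zero_le_one hNsq
  have b2 := abs_sum_fract_div_le (-(1 / (d : ℝ))) hy1 le_rfl zero_le_one hNsq
  have b3 := abs_sum_fract_div_le 0 hy1 le_rfl zero_le_one hBsq
  have b4 := abs_sum_fract_div_le 0 hy1 hinv0 hinv hBsq
  have b5 : 1 ≤ y ^ ((1 : ℝ) / 3) * (1 + 2 * Real.log y) := by
    have l1 : 1 ≤ y ^ ((1 : ℝ) / 3) := Real.one_le_rpow hy1 (by norm_num)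
    have l2 := Real.log_nonneg hy1
    nlinarith
  rw [mul_assoc] at b1 b2 b3 b4 ⊢
  rw [hsmall, hlarge, hsplit]
  clear_value N B y
  rw [abs_le] at b1 b2 b3 b4 htail ⊢
  constructor <;> linarith only [b1, b2, b3, b4, b5, htail]

theorem sum_totient_div_mul_eq {X : ℕ} {s : Finset ℕ} {m : ℕ → ℕ} {w : ℕ → ℝ}
    (hm : ∀ n ∈ s, 0 < m n ∧ m n ≤ X) :
    ∑ n ∈ s, (Nat.totient (m n) : ℝ) / m n * w n =
      ∑ d ∈ Icc 1 X, (ArithmeticFunction.moebius d : ℝ) / d * ∑ n ∈ s with d ∣ m n, w n := by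
  have h : ∀ n ∈ s, (Nat.totient (m n) : ℝ) / m n * w n =
      ∑ d ∈ Icc 1 X, (ArithmeticFunction.moebius d : ℝ) / d * (if d ∣ m n then w n else 0) := by
    intro n hn
    obtain ⟨h0, hX⟩ := hm n hn
    have hdiv : (m n).divisors = {d ∈ Icc 1 X | d ∣ m n} := by
      ext d
      simp only [Nat.mem_divisors, mem_filter, Finset.mem_Icc]
      refine ⟨fun h => ⟨⟨Nat.pos_of_dvd_of_pos h.1 h0, (Nat.le_of_dvd h0 h.1).trans hX⟩, h.1⟩,
        fun h => ⟨h.2, h0.ne'⟩⟩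
    rw [totient_div_eq_sum_moebius_div h0, hdiv, Finset.sum_filter, Finset.sum_mul]
    refine Finset.sum_congr rfl fun d _ => ?_
    split_ifs <;> simp
  rw [Finset.sum_congr rfl h, Finset.sum_comm]
  refine Finset.sum_congr rfl fun d _ => ?_
  rw [← Finset.mul_sum, Finset.sum_filter]

theorem sum_filter_dvd_eq_sum_mul {X d : ℕ} (hd : 0 < d) (w : ℕ → ℝ) :
    ∑ m ∈ Icc 1 X with d ∣ m, w m = ∑ l ∈ Icc 1 (X / d), w (d * l) := by
  refine (Finset.sum_nbij' (fun l => d * l) (fun m => m / d) ?_ ?_ ?_ ?_ ?_).symm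
  · intro l hl
    rw [Finset.mem_Icc, Nat.le_div_iff_mul_le hd] at hl
    rw [mem_filter, Finset.mem_Icc]
    exact ⟨⟨Nat.mul_pos hd hl.1, by linarith⟩, dvd_mul_right _ _⟩
  · intro m hm
    rw [mem_filter, Finset.mem_Icc] at hm
    rw [Finset.mem_Icc]
    exact ⟨Nat.div_pos (Nat.le_of_dvd hm.1.1 hm.2) hd, Nat.div_le_div_right hm.1.2⟩
  · intro l _
    exact Nat.mul_div_cancel_left l hd
  · intro m hm
    exact Nat.mul_div_cancel' (mem_filter.1 hm).2
  · intro l _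
    rfl

theorem sum_range_totient_div_le (X j : ℕ) :
    ∑ m ∈ range (X + 1 + j), (Nat.totient m : ℝ) / (m ^ 2 * (m + 1)) ≤
      ∑ m ∈ range (X + 1), (Nat.totient m : ℝ) / (m ^ 2 * (m + 1)) +
        (1 / ((X : ℝ) + 1) - 1 / ((X : ℝ) + 1 + j)) := by
  induction j with
  | zero => simp
  | succ j ih =>
    rw [← add_assoc, Finset.sum_range_succ]
    have hφ : (Nat.totient (X + 1 + j) : ℝ) ≤ (X + 1 + j : ℝ) := by
      exact_mod_cast Nat.totient_le _
    have : (Nat.totient (X + 1 + j) : ℝ) / (((X + 1 + j : ℕ) : ℝ) ^ 2 * ((X + 1 + j : ℕ) + 1)) ≤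
        1 / (X + 1 + j) - 1 / (X + 1 + (j + 1)) := by
      push_cast
      calc _ ≤ (X + 1 + j : ℝ) / ((X + 1 + j : ℝ) ^ 2 * (X + 1 + j + 1)) := by gcongr
        _ = _ := by field_simp; ring
    push_cast at this ⊢
    linarith

theorem tsum_totient_div_bounds (X : ℕ) :
    ∑ m ∈ Icc 1 X, (Nat.totient m : ℝ) / (m ^ 2 * (m + 1)) ≤
        ∑' m : ℕ, (Nat.totient m : ℝ) / (m ^ 2 * (m + 1)) ∧
      ∑' m : ℕ, (Nat.totient m : ℝ) / (m ^ 2 * (m + 1)) ≤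
        ∑ m ∈ Icc 1 X, (Nat.totient m : ℝ) / (m ^ 2 * (m + 1)) + 1 / ((X : ℝ) + 1) := by
  have hnn : ∀ m : ℕ, 0 ≤ (Nat.totient m : ℝ) / (m ^ 2 * (m + 1)) := fun m => by positivity
  have hIcc : ∑ m ∈ range (X + 1), (Nat.totient m : ℝ) / (m ^ 2 * (m + 1)) =
      ∑ m ∈ Icc 1 X, (Nat.totient m : ℝ) / (m ^ 2 * (m + 1)) := by
    rw [Finset.range_eq_Ico, Finset.sum_eq_sum_Ico_succ_bot (by omega)]
    simp
    rfl
  have hbd : ∀ M, ∑ m ∈ range M, (Nat.totient m : ℝ) / (m ^ 2 * (m + 1)) ≤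
      ∑ m ∈ Icc 1 X, (Nat.totient m : ℝ) / (m ^ 2 * (m + 1)) + 1 / ((X : ℝ) + 1) := by
    intro M
    rw [← hIcc]
    refine (Finset.sum_le_sum_of_subset_of_nonneg
      (by intro a; simp; omega : range M ⊆ range (X + 1 + M)) fun m _ _ => hnn m).trans ?_
    have := sum_range_totient_div_le X M
    have h2 : (0 : ℝ) ≤ 1 / (X + 1 + M) := by positivity
    linarith
  exact ⟨(summable_of_sum_range_le hnn hbd).sum_le_tsum _ fun m _ => hnn m,
    Real.tsum_le_of_sum_range_le hnn hbd⟩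

theorem abs_moebius_div_mul_le {x : ℝ} {d : ℕ} (hd : 0 < d) (hdx : (d : ℝ) ≤ x) {E : ℝ}
    (hE : |E| ≤ 6803 * (x / d) ^ ((1 : ℝ) / 3) * (1 + 2 * Real.log (x / d))) :
    |(ArithmeticFunction.moebius d : ℝ) / d * E| ≤
      6803 * x ^ ((1 : ℝ) / 3) * (1 + 2 * Real.log x) * (1 / (d : ℝ) ^ ((4 : ℝ) / 3)) := by
  have hd1 : (1 : ℝ) ≤ d := by exact_mod_cast hd
  have hd0 : (0 : ℝ) < d := by linarith
  have hx0 : 0 < x := by linarith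
  have hy1 : 1 ≤ x / d := by rw [le_div_iff₀ hd0]; linarith
  have hlog : Real.log (x / d) ≤ Real.log x :=
    Real.log_le_log (by linarith) (div_le_self hx0.le hd1)
  have hlog0 : 0 ≤ Real.log (x / d) := Real.log_nonneg hy1
  have hmu : |(ArithmeticFunction.moebius d : ℝ) / d| ≤ 1 / d := by
    rw [abs_div, abs_of_pos hd0]
    gcongr
    exact_mod_cast ArithmeticFunction.abs_moebius_le_one
  rw [abs_mul]
  calc _ ≤ 1 / d * (6803 * (x / d) ^ ((1 : ℝ) / 3) * (1 + 2 * Real.log x)) := by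
        gcongr
        refine hE.trans ?_
        gcongr
    _ = _ := by
        have e : (d : ℝ) ^ ((4 : ℝ) / 3) = d * (d : ℝ) ^ ((1 : ℝ) / 3) := by
          rw [← Real.rpow_one_add' hd0.le (by norm_num)]; norm_num
        rw [Real.div_rpow hx0.le hd0.le, e]
        field_simp

/-- `∑_{n ≤ x} φ(⌊x/n⌋)/⌊x/n⌋ = x ∑_{m ≥ 1} φ(m)/(m²(m+1)) + O(x^{1/3} log x)`. -/
theorem sum_totient_ratio_floor_div :
    (fun x : ℝ =>
        (∑ n ∈ Finset.Icc 1 ⌊x⌋₊,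
          (Nat.totient ⌊x / (n : ℝ)⌋₊ : ℝ) / (⌊x / (n : ℝ)⌋₊ : ℝ)) -
        x * ∑' m : ℕ, (Nat.totient m : ℝ) / (m ^ 2 * (m + 1)))
    =O[atTop] fun x : ℝ => x ^ ((1 : ℝ) / 3) * Real.log x := by
  have hZ : Summable fun d : ℕ => 1 / (d : ℝ) ^ ((4 : ℝ) / 3) :=
    Real.summable_one_div_nat_rpow.2 (by norm_num)
  set Z := ∑' d : ℕ, 1 / (d : ℝ) ^ ((4 : ℝ) / 3) with hZdef
  have hZ0 : 0 ≤ Z := tsum_nonneg fun d => by positivity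
  refine Asymptotics.IsBigO.of_bound (1 + 20409 * Z) ?_
  filter_upwards [eventually_ge_atTop (Real.exp 1)] with x hx
  have hx1 : 1 ≤ x := by linarith [Real.add_one_le_exp (1 : ℝ)]
  have hx0 : 0 < x := by linarith
  have hlog : 1 ≤ Real.log x := (Real.le_log_iff_exp_le hx0).2 hx
  have hpow : 1 ≤ x ^ ((1 : ℝ) / 3) := Real.one_le_rpow hx1 (by norm_num)
  set X := ⌊x⌋₊ with hX
  obtain ⟨t1, t2⟩ := tsum_totient_div_bounds X
  set C := ∑' m : ℕ, (Nat.totient m : ℝ) / (m ^ 2 * (m + 1))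
  have hS : ∑ n ∈ Icc 1 X, (Nat.totient ⌊x / (n : ℝ)⌋₊ : ℝ) / (⌊x / (n : ℝ)⌋₊ : ℝ) =
      ∑ d ∈ Icc 1 X, (ArithmeticFunction.moebius d : ℝ) / d *
        ((filter (fun n : ℕ => d ∣ ⌊x / n⌋₊) (Icc 1 X)).card : ℝ) := by
    have := sum_totient_div_mul_eq (X := X) (s := Icc 1 X) (m := fun n => ⌊x / (n : ℝ)⌋₊)
      (w := fun _ => 1) (fun n hn => by
        rw [Finset.mem_Icc, hX, Nat.le_floor_iff hx0.le] at hn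
        have hn1 : (1 : ℝ) ≤ n := by exact_mod_cast hn.1
        refine ⟨Nat.floor_pos.2 ?_, Nat.floor_le_floor (div_le_self hx0.le hn1)⟩
        rw [le_div_iff₀ (by linarith)]; linarith)
    simpa using this
  have hM : x * ∑ m ∈ Icc 1 X, (Nat.totient m : ℝ) / (m ^ 2 * (m + 1)) =
      ∑ d ∈ Icc 1 X, (ArithmeticFunction.moebius d : ℝ) / d *
        ∑ l ∈ Icc 1 (X / d), x / ((d * l : ℝ) * (d * l + 1)) := by
    have h := sum_totient_div_mul_eq (X := X) (s := Icc 1 X) (m := fun n => n)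
      (w := fun m => x / (m * (m + 1))) (fun n hn => Finset.mem_Icc.1 hn)
    rw [Finset.mul_sum]
    refine Eq.trans (Finset.sum_congr rfl fun m hm => ?_) (h.trans
      (Finset.sum_congr rfl fun d hd => ?_))
    · have : (m : ℝ) ≠ 0 := by exact_mod_cast (by have := (Finset.mem_Icc.1 hm).1; omega : m ≠ 0)
      field_simp
    · rw [sum_filter_dvd_eq_sum_mul (Finset.mem_Icc.1 hd).1]
      push_cast
      rfl
  have hdiff : |∑ n ∈ Icc 1 X, (Nat.totient ⌊x / (n : ℝ)⌋₊ : ℝ) / (⌊x / (n : ℝ)⌋₊ : ℝ) -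
      x * ∑ m ∈ Icc 1 X, (Nat.totient m : ℝ) / (m ^ 2 * (m + 1))| ≤
      6803 * x ^ ((1 : ℝ) / 3) * (1 + 2 * Real.log x) * Z := by
    rw [hS, hM, ← Finset.sum_sub_distrib]
    simp only [← mul_sub]
    refine (Finset.abs_sum_le_sum_abs _ _).trans ?_
    calc _ ≤ ∑ d ∈ Icc 1 X, 6803 * x ^ ((1 : ℝ) / 3) * (1 + 2 * Real.log x) *
          (1 / (d : ℝ) ^ ((4 : ℝ) / 3)) := by
          refine Finset.sum_le_sum fun d hd => ?_
          rw [Finset.mem_Icc] at hd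
          have hdx : (d : ℝ) ≤ x := (Nat.le_floor_iff hx0.le).1 hd.2
          exact abs_moebius_div_mul_le hd.1 hdx (abs_card_filter_dvd_floor_div_sub_le hd.1 hdx)
      _ ≤ _ := by
          rw [← Finset.mul_sum]
          gcongr
          exact hZ.sum_le_tsum _ fun d _ => by positivity
  have htail : |x * ∑ m ∈ Icc 1 X, (Nat.totient m : ℝ) / (m ^ 2 * (m + 1)) - x * C| ≤ 1 := by
    have hXlt : x < X + 1 := Nat.lt_floor_add_one x
    have h1 : x * (1 / (X + 1)) ≤ 1 := by
      rw [mul_one_div, div_le_one (by positivity)]; exact hXlt.le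
    have h2 := mul_le_mul_of_nonneg_left t1 hx0.le
    have h3 := mul_le_mul_of_nonneg_left t2 hx0.le
    rw [abs_le]
    constructor <;> linarith
  have hR : 0 ≤ x ^ ((1 : ℝ) / 3) * Real.log x := by positivity
  rw [Real.norm_eq_abs, Real.norm_eq_abs, abs_of_nonneg hR]
  calc _ ≤ _ := abs_sub_le _ (x * ∑ m ∈ Icc 1 X, (Nat.totient m : ℝ) / (m ^ 2 * (m + 1))) _
    _ ≤ 6803 * x ^ ((1 : ℝ) / 3) * (3 * Real.log x) * Z + x ^ ((1 : ℝ) / 3) * Real.log x := by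
        refine add_le_add (hdiff.trans ?_) (htail.trans (by nlinarith))
        gcongr
        linarith
    _ = _ := by ring
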